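/- Fix x ∈ ℝ and let h_n = (c_n x + d_n)^{1/2} with c_n = 2 − 2b_n^{−2} and d_n = b_n² − 2b_n^{−2}, defined for n large enough that c_n x + d_n > 0. Then as n → ∞, 1 − Φ(h_n) = n^{−1} e^{−x} ( 1 + b_n^{−4} (7/2 + 3x + x²) − b_n^{−6} (43/3 + 14x + 6x² + (4/3) x³) + O(b_n^{−8}) ). -/

import Mathlib

open Real Filter Topology

/-- The standard normal distribution function. -/
noncomputable def stdNormalCDF (x : ℝ) : ℝ :=
  ∫ u in Set.Iic x, Real.exp (-u ^ 2 / 2) / Real.sqrt (2 * Real.pi)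

def Exp4 (f : ℝ → ℝ) (a0 a1 a2 a3 : ℝ) : Prop :=
  (fun e => f e - (a0 + a1 * e + a2 * e ^ 2 + a3 * e ^ 3)) =O[𝓝 (0 : ℝ)] (fun e => e ^ 4)

lemma isBigO_one_of_cont {f : ℝ → ℝ} (hf : ContinuousAt f 0) :
    f =O[𝓝 (0 : ℝ)] (fun _ => (1 : ℝ)) := hf.isBigO_one ℝ

lemma Exp4.of_poly (a0 a1 a2 a3 : ℝ) :
    Exp4 (fun e => a0 + a1 * e + a2 * e ^ 2 + a3 * e ^ 3) a0 a1 a2 a3 := by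
  unfold Exp4
  simp only [sub_self]
  exact Asymptotics.isBigO_zero _ _

lemma Exp4.add {f g : ℝ → ℝ} {a0 a1 a2 a3 b0 b1 b2 b3 : ℝ}
    (hf : Exp4 f a0 a1 a2 a3) (hg : Exp4 g b0 b1 b2 b3) :
    Exp4 (fun e => f e + g e) (a0 + b0) (a1 + b1) (a2 + b2) (a3 + b3) := by
  unfold Exp4 at *
  refine (Asymptotics.IsBigO.add hf hg).congr_left (fun e => ?_)
  ring

lemma Exp4.isBigO_one {g : ℝ → ℝ} {b0 b1 b2 b3 : ℝ}
    (hg : Exp4 g b0 b1 b2 b3) : g =O[𝓝 (0 : ℝ)] (fun _ => (1 : ℝ)) := by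
  unfold Exp4 at hg
  have h1 : (fun e : ℝ => e ^ 4) =O[𝓝 (0 : ℝ)] (fun _ => (1 : ℝ)) :=
    isBigO_one_of_cont (by fun_prop)
  have h2 : (fun e : ℝ => b0 + b1 * e + b2 * e ^ 2 + b3 * e ^ 3) =O[𝓝 (0 : ℝ)] (fun _ => (1 : ℝ)) :=
    isBigO_one_of_cont (by fun_prop)
  refine ((hg.trans h1).add h2).congr_left (fun e => ?_)
  ring

lemma Exp4.mul {f g : ℝ → ℝ} {a0 a1 a2 a3 b0 b1 b2 b3 : ℝ}
    (hf : Exp4 f a0 a1 a2 a3) (hg : Exp4 g b0 b1 b2 b3) :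
    Exp4 (fun e => f e * g e) (a0 * b0) (a0 * b1 + a1 * b0) (a0 * b2 + a1 * b1 + a2 * b0)
      (a0 * b3 + a1 * b2 + a2 * b1 + a3 * b0) := by
  have hg1 := hg.isBigO_one
  unfold Exp4 at *
  have h2 : (fun e : ℝ => a0 + a1 * e + a2 * e ^ 2 + a3 * e ^ 3) =O[𝓝 (0 : ℝ)] (fun _ => (1 : ℝ)) :=
    isBigO_one_of_cont (by fun_prop)
  have h3 : (fun e : ℝ => (a1 * b3 + a2 * b2 + a3 * b1) + (a2 * b3 + a3 * b2) * e + a3 * b3 * e ^ 2)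
      =O[𝓝 (0 : ℝ)] (fun _ => (1 : ℝ)) :=
    isBigO_one_of_cont (by fun_prop)
  have h4 := ((hf.mul hg1).add ((h2.mul hg).congr_right (g₂ := fun e : ℝ => e ^ 4 * 1)
    (fun e => by ring))).add
    ((Asymptotics.isBigO_refl (fun e : ℝ => e ^ 4) (𝓝 0)).mul h3)
  refine h4.congr (fun e => ?_) (fun e => ?_)
  · ring
  · ring

lemma Exp4.exp (k : ℝ) : Exp4 (fun e => Real.exp (k * e)) 1 k (k ^ 2 / 2) (k ^ 3 / 6) := by
  unfold Exp4
  have h := Real.exp_sub_sum_range_isBigO_pow 4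
  have ht : Tendsto (fun e : ℝ => k * e) (𝓝 0) (𝓝 0) := by
    have : ContinuousAt (fun e : ℝ => k * e) 0 := by fun_prop
    simpa [ContinuousAt] using this
  have h1 := h.comp_tendsto ht
  have h2 : (fun e : ℝ => (k * e) ^ 4) =O[𝓝 (0 : ℝ)] (fun e => e ^ 4) := by
    refine (Asymptotics.isBigO_const_mul_self (k ^ 4) (fun e : ℝ => e ^ 4) (𝓝 0)).congr_left
      (fun e => by ring)
  refine (h1.trans h2).congr_left (fun e => ?_)
  simp [Finset.sum_range_succ, Nat.factorial]
  ring

lemma Exp4.invsqrt (a c : ℝ) :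
    Exp4 (fun e => 1 / √(1 + a * e + c * e ^ 2)) 1 (-a / 2) (3 * a ^ 2 / 8 - c / 2)
      (3 * a * c / 4 - 5 * a ^ 3 / 16) := by
  have hq := Exp4.of_poly 1 (-a / 2) (3 * a ^ 2 / 8 - c / 2) (3 * a * c / 4 - 5 * a ^ 3 / 16)
  have hw := Exp4.of_poly 1 a c 0
  have h := (hw.mul hq).mul hq
  unfold Exp4 at h ⊢
  set q : ℝ → ℝ := fun e => 1 + (-a / 2) * e + (3 * a ^ 2 / 8 - c / 2) * e ^ 2
    + (3 * a * c / 4 - 5 * a ^ 3 / 16) * e ^ 3 with hqd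
  have hqc : Continuous q := by rw [hqd]; fun_prop
  have hwc : Continuous (fun e : ℝ => 1 + a * e + c * e ^ 2) := by fun_prop
  have hwp : ∀ᶠ e in 𝓝 (0 : ℝ), 0 < 1 + a * e + c * e ^ 2 := by
    apply hwc.continuousAt.eventually (lt_mem_nhds _)
    norm_num
  have hqp : ∀ᶠ e in 𝓝 (0 : ℝ), 0 < q e := by
    apply hqc.continuousAt.eventually (lt_mem_nhds _)
    norm_num [hqd]
  have hc1 : ContinuousAt (fun e : ℝ => 1 / √(1 + a * e + c * e ^ 2)) 0 := by
    apply ContinuousAt.div continuousAt_const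
    · exact hwc.sqrt.continuousAt
    · norm_num
  have hc2 : ContinuousAt
      (fun e : ℝ => -1 / ((1 + a * e + c * e ^ 2) * (1 / √(1 + a * e + c * e ^ 2) + q e))) 0 := by
    apply ContinuousAt.div continuousAt_const
    · exact hwc.continuousAt.mul (hc1.add hqc.continuousAt)
    · norm_num [hqd]
  have h5 := h.mul (isBigO_one_of_cont hc2)
  refine (h5.congr' ?_ ?_)
  · filter_upwards [hwp, hqp] with e he hqe
    have hs : 0 < √(1 + a * e + c * e ^ 2) := Real.sqrt_pos.2 he
    have hss := Real.sq_sqrt he.le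
    set s := √(1 + a * e + c * e ^ 2) with hsd
    have e1 : 1 + (-a / 2) * e + (3 * a ^ 2 / 8 - c / 2) * e ^ 2
      + (3 * a * c / 4 - 5 * a ^ 3 / 16) * e ^ 3 = q e := rfl
    rw [e1]
    have hne : (1 + a * e + c * e ^ 2) * (1 / s + q e) ≠ 0 := by positivity
    have : 1 / s - q e = (1 - (1 + a * e + c * e ^ 2) * q e * q e) /
        ((1 + a * e + c * e ^ 2) * (1 / s + q e)) := by
      rw [eq_div_iff hne, ← hss]
      field_simp
      ring
    rw [this]
    rw [mul_div_assoc', div_left_inj' hne]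
    ring
  · exact Eventually.of_forall (fun e => by ring)

lemma main_expansion (x : ℝ) :
    (fun e : ℝ => (1 / √(1 + (2 * x) * e + (-2 * (1 + x)) * e ^ 2)) * Real.exp ((1 + x) * e) *
      (1 - e * (1 / √(1 + (2 * x) * e + (-2 * (1 + x)) * e ^ 2)) ^ 2
       + 3 * (e * (1 / √(1 + (2 * x) * e + (-2 * (1 + x)) * e ^ 2)) ^ 2) ^ 2
       - 15 * (e * (1 / √(1 + (2 * x) * e + (-2 * (1 + x)) * e ^ 2)) ^ 2) ^ 3)
      - (1 + (7 / 2 + 3 * x + x ^ 2) * e ^ 2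
        - (43 / 3 + 14 * x + 6 * x ^ 2 + 4 / 3 * x ^ 3) * e ^ 3)) =O[𝓝 (0 : ℝ)] (fun e => e ^ 4) := by
  have hs := Exp4.invsqrt (2 * x) (-2 * (1 + x))
  have hE := Exp4.exp (1 + x)
  have hz := (Exp4.of_poly 0 1 0 0).mul (hs.mul hs)
  have hM := (((Exp4.of_poly 1 0 0 0).add ((Exp4.of_poly (-1) 0 0 0).mul hz)).add
    ((Exp4.of_poly 3 0 0 0).mul (hz.mul hz))).add ((Exp4.of_poly (-15) 0 0 0).mul (hz.mul (hz.mul hz)))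
  have hF := (hs.mul hE).mul hM
  unfold Exp4 at hF
  refine hF.congr_left (fun e => ?_)
  ring

lemma gauss_integrable : MeasureTheory.Integrable
    (fun u : ℝ => Real.exp (-u ^ 2 / 2) / √(2 * π)) := by
  have := (integrable_exp_neg_mul_sq (b := 1 / 2) (by norm_num)).div_const (√(2 * π))
  refine this.congr (Eventually.of_forall fun u => ?_)
  simp only
  congr 2; ring

lemma gauss_integral : ∫ u : ℝ, Real.exp (-u ^ 2 / 2) / √(2 * π) = 1 := by
  have h := integral_gaussian (1 / 2)
  rw [MeasureTheory.integral_div]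
  have : (fun u : ℝ => Real.exp (-u ^ 2 / 2)) = fun u => Real.exp (-(1 / 2) * u ^ 2) := by
    ext u; congr 1; ring
  rw [this, h]
  have : π / (1 / 2) = 2 * π := by ring
  rw [this]
  have : 0 < √(2 * π) := by positivity
  field_simp

lemma cdf_tendsto : Tendsto stdNormalCDF atTop (𝓝 1) := by
  have := (MeasureTheory.aecover_Iic (μ := MeasureTheory.volume) (tendsto_id (α := ℝ) (x := atTop))).integral_tendsto_of_countably_generated
    gauss_integrable
  rw [gauss_integral] at this
  exact this

lemma cdf_deriv (y : ℝ) :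
    HasDerivAt stdNormalCDF (Real.exp (-y ^ 2 / 2) / √(2 * π)) y := by
  have h0 : ∀ t, stdNormalCDF t = stdNormalCDF 0 + ∫ u in (0:ℝ)..t, Real.exp (-u ^ 2 / 2) / √(2 * π) := by
    intro t
    have := intervalIntegral.integral_Iic_sub_Iic (μ := MeasureTheory.volume) (a := 0) (b := t)
      gauss_integrable.integrableOn gauss_integrable.integrableOn
    rw [← this]; unfold stdNormalCDF; ring
  have hc : Continuous (fun u : ℝ => Real.exp (-u ^ 2 / 2) / √(2 * π)) := by fun_prop
  have h1 := (intervalIntegral.integral_hasDerivAt_right (hc.intervalIntegrable 0 y)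
    hc.stronglyMeasurable.stronglyMeasurableAtFilter hc.continuousAt).const_add (stdNormalCDF 0)
  exact h1.congr_of_eventuallyEq (Eventually.of_forall h0)

lemma nonneg_of_deriv_nonpos {D D' : ℝ → ℝ} (hD : ∀ y > 0, HasDerivAt D (D' y) y)
    (hD' : ∀ y > 0, D' y ≤ 0) (hl : Tendsto D atTop (𝓝 0)) (y : ℝ) (hy : 0 < y) : 0 ≤ D y := by
  have ha : AntitoneOn D (Set.Ioi 0) := by
    apply antitoneOn_of_deriv_nonpos (convex_Ioi 0)
    · exact fun t ht => (hD t ht).continuousAt.continuousWithinAt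
    · rw [interior_Ioi]
      exact fun t ht => (hD t ht).differentiableAt.differentiableWithinAt
    · rw [interior_Ioi]
      intro t ht
      rw [(hD t ht).deriv]; exact hD' t ht
  refine le_of_tendsto hl ?_
  filter_upwards [eventually_ge_atTop y] with t ht
  exact ha hy (lt_of_lt_of_le hy ht) ht

lemma inv_pow_deriv (y : ℝ) (hy : 0 < y) (k : ℕ) :
    HasDerivAt (fun u : ℝ => Real.exp (-u ^ 2 / 2) * (u⁻¹) ^ (k + 1))
      (-Real.exp (-y ^ 2 / 2) * ((y⁻¹) ^ k + (k + 1) * (y⁻¹) ^ (k + 2))) y := by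
  have h1 : HasDerivAt (fun u : ℝ => Real.exp (-u ^ 2 / 2)) (Real.exp (-y ^ 2 / 2) * (-y)) y := by
    have : HasDerivAt (fun u : ℝ => -u ^ 2 / 2) (-y) y := by
      have := ((hasDerivAt_pow 2 y).neg).div_const 2
      refine this.congr_deriv ?_
      norm_num; ring
    exact this.exp
  have h2 := h1.mul ((hasDerivAt_inv hy.ne').pow (k + 1))
  refine h2.congr_deriv ?_
  push_cast
  simp only [Pi.pow_apply]
  rw [← inv_pow]
  have h3 : y * y⁻¹ = 1 := mul_inv_cancel₀ hy.ne'
  linear_combination (-Real.exp (-y ^ 2 / 2) * (y⁻¹) ^ k) * h3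

lemma exp_inv_tendsto (k : ℕ) :
    Tendsto (fun u : ℝ => Real.exp (-u ^ 2 / 2) * (u⁻¹) ^ (k + 1)) atTop (𝓝 0) := by
  have h1 : Tendsto (fun u : ℝ => (u⁻¹) ^ (k + 1)) atTop (𝓝 0) := by
    simpa using (tendsto_inv_atTop_zero (𝕜 := ℝ)).pow (k + 1)
  refine squeeze_zero' ?_ ?_ h1
  · filter_upwards [eventually_gt_atTop 0] with t ht; positivity
  · filter_upwards [eventually_gt_atTop 0] with t ht
    have : Real.exp (-t ^ 2 / 2) ≤ 1 := Real.exp_le_one_iff.2 (by nlinarith [sq_nonneg t])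
    have h3 : 0 ≤ (t⁻¹) ^ (k + 1) := by positivity
    nlinarith

/-- Mills ratio expansion. -/
lemma mills (y : ℝ) (hy : 0 < y) :
    |√(2 * π) * Real.exp (y ^ 2 / 2) * y * (1 - stdNormalCDF y)
      - (1 - (y⁻¹) ^ 2 + 3 * ((y⁻¹) ^ 2) ^ 2 - 15 * ((y⁻¹) ^ 2) ^ 3)| ≤ 105 * ((y⁻¹) ^ 2) ^ 4 := by
  have hr : 0 < √(2 * π) := by positivity
  set r := √(2 * π) with hrd
  let G : ℕ → ℝ → ℝ := fun k u => Real.exp (-u ^ 2 / 2) * (u⁻¹) ^ (k + 1)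
  have hT : ∀ y, HasDerivAt (fun u => r * (1 - stdNormalCDF u)) (-Real.exp (-y ^ 2 / 2)) y := by
    intro y
    refine (((cdf_deriv y).const_sub 1).const_mul r).congr_deriv ?_
    rw [← hrd]; field_simp
  have hTl : Tendsto (fun u => r * (1 - stdNormalCDF u)) atTop (𝓝 0) := by
    simpa using (cdf_tendsto.const_sub 1).const_mul r
  have hGl : ∀ k, Tendsto (G k) atTop (𝓝 0) := exp_inv_tendsto
  have lo : 0 ≤ r * (1 - stdNormalCDF y) - (G 0 y - G 2 y + 3 * G 4 y - 15 * G 6 y) := by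
    refine nonneg_of_deriv_nonpos
      (D := fun y => r * (1 - stdNormalCDF y) - (G 0 y - G 2 y + 3 * G 4 y - 15 * G 6 y))
      (D' := fun y => -Real.exp (-y ^ 2 / 2) * (105 * (y⁻¹) ^ 8)) ?_ ?_ ?_ y hy
    · intro t ht
      have := (hT t).sub ((((inv_pow_deriv t ht 0).sub (inv_pow_deriv t ht 2)).add
        ((inv_pow_deriv t ht 4).const_mul 3)).sub ((inv_pow_deriv t ht 6).const_mul 15))
      refine this.congr_deriv ?_
      push_cast; ring
    · intro t ht
      have : 0 ≤ Real.exp (-t ^ 2 / 2) * (105 * (t⁻¹) ^ 8) := by positivity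
      linarith
    · simpa using hTl.sub ((((hGl 0).sub (hGl 2)).add ((hGl 4).const_mul 3)).sub ((hGl 6).const_mul 15))
  have hi : 0 ≤ (G 0 y - G 2 y + 3 * G 4 y - 15 * G 6 y + 105 * G 8 y) - r * (1 - stdNormalCDF y) := by
    refine nonneg_of_deriv_nonpos
      (D := fun y => (G 0 y - G 2 y + 3 * G 4 y - 15 * G 6 y + 105 * G 8 y) - r * (1 - stdNormalCDF y))
      (D' := fun y => -Real.exp (-y ^ 2 / 2) * (945 * (y⁻¹) ^ 10)) ?_ ?_ ?_ y hy
    · intro t ht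
      have := (((((inv_pow_deriv t ht 0).sub (inv_pow_deriv t ht 2)).add
        ((inv_pow_deriv t ht 4).const_mul 3)).sub ((inv_pow_deriv t ht 6).const_mul 15)).add
        ((inv_pow_deriv t ht 8).const_mul 105)).sub (hT t)
      refine this.congr_deriv ?_
      push_cast; ring
    · intro t ht
      have : 0 ≤ Real.exp (-t ^ 2 / 2) * (945 * (t⁻¹) ^ 10) := by positivity
      linarith
    · simpa using ((((((hGl 0).sub (hGl 2)).add ((hGl 4).const_mul 3)).sub ((hGl 6).const_mul 15)).add
        ((hGl 8).const_mul 105)).sub hTl)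
  have hGe : ∀ k, Real.exp (y ^ 2 / 2) * y * G k y = (y⁻¹) ^ k := by
    intro k
    have : Real.exp (y ^ 2 / 2) * Real.exp (-y ^ 2 / 2) = 1 := by
      rw [← Real.exp_add]; simp [neg_div]
    have h2 : y * y⁻¹ = 1 := mul_inv_cancel₀ hy.ne'
    calc _ = (Real.exp (y ^ 2 / 2) * Real.exp (-y ^ 2 / 2)) * (y * y⁻¹) * (y⁻¹) ^ k := by
          simp only [G]; ring
      _ = _ := by rw [this, h2]; ring
  have hp : 0 < Real.exp (y ^ 2 / 2) * y := by positivity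
  have lo' := mul_nonneg hp.le lo
  have hi' := mul_nonneg hp.le hi
  have g0 := hGe 0
  have g2 := hGe 2
  have g4 := hGe 4
  have g6 := hGe 6
  have g8 := hGe 8
  rw [abs_le]
  constructor
  · have : 0 ≤ 105 * ((y⁻¹) ^ 2) ^ 4 := by positivity
    linear_combination lo' - g0 + g2 - 3 * g4 + 15 * g6 + this
  · linear_combination hi' + g0 - g2 + 3 * g4 - 15 * g6 + 105 * g8

lemma b_tendsto (b : ℕ → ℝ)
    (hb : ∀ n : ℕ, 1 ≤ n → 0 < b n ∧
      2 * Real.pi * (b n) ^ 2 * Real.exp ((b n) ^ 2) = (n : ℝ) ^ 2) : Tendsto b atTop atTop := by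
  rw [tendsto_atTop]
  intro K
  have h1 : ∀ᶠ n : ℕ in atTop, 2 * Real.pi * K ^ 2 * Real.exp (K ^ 2) + 1 < (n : ℝ) :=
    tendsto_natCast_atTop_atTop.eventually (eventually_gt_atTop _)
  filter_upwards [h1, eventually_ge_atTop 1] with n hn h1n
  obtain ⟨hp, he⟩ := hb n h1n
  by_contra! hlt
  have hsq : (b n) ^ 2 ≤ K ^ 2 := by gcongr
  have h3 : 2 * Real.pi * (b n) ^ 2 * Real.exp ((b n) ^ 2) ≤ 2 * Real.pi * K ^ 2 * Real.exp (K ^ 2) := by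
    gcongr
  have h4 : (1 : ℝ) ≤ n := by exact_mod_cast h1n
  nlinarith

/-- With `b_n` the unique positive solution of `2π b_n² exp(b_n²) = n²`,
`c_n = 2 − 2b_n^{−2}`, `d_n = b_n² − 2b_n^{−2}` and `h_n = (c_n x + d_n)^{1/2}`:
`1 − Φ(h_n) = n⁻¹ e^{−x} (1 + b_n^{−4}(7/2 + 3x + x²)
  − b_n^{−6}(43/3 + 14x + 6x² + (4/3)x³) + O(b_n^{−8}))`. -/
theorem powered_extremes_tail_expansion_t_eq_two
    (b : ℕ → ℝ)
    (hb : ∀ n : ℕ, 1 ≤ n → 0 < b n ∧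
      2 * Real.pi * (b n) ^ 2 * Real.exp ((b n) ^ 2) = (n : ℝ) ^ 2)
    (x : ℝ)
    (c d h : ℕ → ℝ)
    (hc : ∀ n : ℕ, c n = 2 - 2 / (b n) ^ 2)
    (hd : ∀ n : ℕ, d n = (b n) ^ 2 - 2 / (b n) ^ 2)
    (hh : ∀ n : ℕ, h n = (c n * x + d n) ^ ((1 : ℝ) / 2)) :
    ∃ C > (0 : ℝ), ∃ N : ℕ, ∀ n : ℕ, N ≤ n →
      0 < c n * x + d n ∧
      |(n : ℝ) * Real.exp x * (1 - stdNormalCDF (h n)) -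
        (1 + (7 / 2 + 3 * x + x ^ 2) / (b n) ^ 4 -
          (43 / 3 + 14 * x + 6 * x ^ 2 + 4 / 3 * x ^ 3) / (b n) ^ 6)|
      ≤ C / (b n) ^ 8 := by
  have hbt := b_tendsto b hb
  have het : Tendsto (fun n => (b n ^ 2)⁻¹) atTop (𝓝 0) :=
    tendsto_inv_atTop_zero.comp ((tendsto_pow_atTop (two_ne_zero)).comp hbt)
  obtain ⟨C1, hC1, hM⟩ := (main_expansion x).exists_pos
  have hM := hM.bound
  have hwc : Continuous (fun e : ℝ => 1 + (2 * x) * e + (-2 * (1 + x)) * e ^ 2) := by fun_prop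
  have hwp : ∀ᶠ e in 𝓝 (0 : ℝ), 1 / 2 < 1 + (2 * x) * e + (-2 * (1 + x)) * e ^ 2 := by
    apply hwc.continuousAt.eventually (lt_mem_nhds _)
    norm_num
  have hEp : ∀ᶠ e in 𝓝 (0 : ℝ), Real.exp ((1 + x) * e) < 2 := by
    have : Continuous (fun e : ℝ => Real.exp ((1 + x) * e)) := by fun_prop
    apply this.continuousAt.eventually (gt_mem_nhds _)
    norm_num
  refine ⟨C1 + 2 * 2 * (105 * 16), by positivity, ?_⟩
  rw [← eventually_atTop]
  filter_upwards [het.eventually hM, het.eventually hwp, het.eventually hEp,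
    eventually_ge_atTop 1] with n h1 h2 h3 hn
  obtain ⟨hbp, hbe⟩ := hb n hn
  set e := (b n ^ 2)⁻¹ with hed
  have hep : 0 < e := by positivity
  set w := 1 + (2 * x) * e + (-2 * (1 + x)) * e ^ 2 with hwd
  have hw0 : 0 < w := by linarith
  have hy : c n * x + d n = b n ^ 2 * w := by
    rw [hc, hd, hwd, hed]; field_simp; ring
  have hyp : 0 < c n * x + d n := by rw [hy]; positivity
  refine ⟨hyp, ?_⟩
  have hsp : 0 < √w := Real.sqrt_pos.2 hw0
  have hhn : h n = b n * √w := by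
    rw [hh, hy, ← Real.sqrt_eq_rpow, Real.sqrt_mul (by positivity), Real.sqrt_sq hbp.le]
  have hhp : 0 < h n := by rw [hhn]; positivity
  have hss : √w ^ 2 = w := Real.sq_sqrt hw0.le
  have hnn : (n : ℝ) = √(2 * π) * b n * Real.exp (b n ^ 2 / 2) := by
    rw [← Real.sqrt_sq (show (0 : ℝ) ≤ n by positivity), ← hbe, Real.sqrt_mul (by positivity),
      Real.sqrt_mul (by positivity), Real.sqrt_sq hbp.le, ← Real.exp_half]
  have hexp : Real.exp (b n ^ 2 / 2) * Real.exp x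
      = Real.exp ((1 + x) * e) * Real.exp (h n ^ 2 / 2) := by
    rw [← Real.exp_add, ← Real.exp_add, hhn, mul_pow, hss, hwd, hed]
    congr 1
    field_simp
    ring
  have hz : ((h n)⁻¹) ^ 2 = e * (1 / √w) ^ 2 := by
    rw [hhn, hed]; field_simp
  have hm := mills (h n) hhp
  rw [hz] at hm
  set m := √(2 * π) * Real.exp (h n ^ 2 / 2) * h n * (1 - stdNormalCDF (h n)) with hmd
  have hA : (n : ℝ) * Real.exp x * (1 - stdNormalCDF (h n))
      = (1 / √w) * Real.exp ((1 + x) * e) * m := by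
    have : (1 / √w) * h n = b n := by rw [hhn]; field_simp
    calc _ = √(2 * π) * b n * (Real.exp (b n ^ 2 / 2) * Real.exp x) * (1 - stdNormalCDF (h n)) := by
          rw [hnn]; ring
      _ = _ := by rw [hexp, hmd, ← this]; ring
  rw [hA]
  have hs2 : (1 / √w) ^ 2 ≤ 2 := by
    rw [div_pow, hss, one_pow, div_le_iff₀ hw0]; linarith
  have hs1 : 1 / √w ≤ 2 := by
    nlinarith [sq_nonneg (1 / √w - 1)]
  have hs0 : 0 < 1 / √w := by positivity
  have e4 : 1 / b n ^ 4 = e ^ 2 := by rw [hed]; field_simp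
  have e6 : 1 / b n ^ 6 = e ^ 3 := by rw [hed]; field_simp
  have e8 : 1 / b n ^ 8 = e ^ 4 := by rw [hed]; field_simp
  rw [div_eq_mul_one_div _ (b n ^ 4), div_eq_mul_one_div _ (b n ^ 6),
    div_eq_mul_one_div _ (b n ^ 8), e4, e6, e8]
  rw [Real.norm_eq_abs, Real.norm_eq_abs, abs_of_pos (show 0 < e ^ 4 by positivity)] at h1
  set s := 1 / √w with hsd
  set E := Real.exp ((1 + x) * e) with hEd
  have hE0 : 0 < E := Real.exp_pos _
  set z := e * s ^ 2 with hzd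
  have hz0 : 0 < z := by positivity
  have hz4 : z ^ 4 ≤ 16 * e ^ 4 := by
    have : z ≤ 2 * e := by rw [hzd]; nlinarith
    calc z ^ 4 ≤ (2 * e) ^ 4 := by gcongr
      _ = _ := by ring
  set M := 1 - z + 3 * z ^ 2 - 15 * z ^ 3 with hMd
  set P := 1 + (7 / 2 + 3 * x + x ^ 2) * e ^ 2
        - (43 / 3 + 14 * x + 6 * x ^ 2 + 4 / 3 * x ^ 3) * e ^ 3 with hPd
  have h5 : |s * E * (m - M)| ≤ 2 * 2 * (105 * (16 * e ^ 4)) := by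
    rw [abs_mul, abs_of_pos (by positivity : 0 < s * E)]
    have : |m - M| ≤ 105 * (16 * e ^ 4) := by linarith
    gcongr
  calc |s * E * m - P| = |s * E * (m - M) + (s * E * M - P)| := by congr 1; ring
    _ ≤ |s * E * (m - M)| + |s * E * M - P| := abs_add_le _ _
    _ ≤ 2 * 2 * (105 * (16 * e ^ 4)) + C1 * e ^ 4 := add_le_add h5 h1
    _ = _ := by ring
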